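/- For any λ > 0, the vector α* ∈ ℝ^N defined by α*_i = (m_i/M_p)·[ 1 + M_p·(L̄_p − L̂_i)/λ ]_+ for each i, where [x]_+ = max(0, x) and p = max{ k ∈ {1, …, N} : 1 + M_k·(L̄_k − L̂_k)/λ > 0 }, is a minimizer of F(α) = Σ_{i=1}^N α_i·L̂_i + (λ/2)·Σ_{i=1}^N α_i²/m_i over the simplex Δ = { α ∈ ℝ^N : α_i ≥ 0 for all i, Σ_{i=1}^N α_i = 1 }. -/

import Mathlib

/-!
Write `p` for the cut-off index and `c = L̄_p + λ/M_p`. Then `α*_i = (m_i/λ)·[c - L̂_i]₊`: the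
weights fill the clients up to the water level `c`, which is the Lagrange multiplier of the
constraint `Σ α_i = 1`. For any level `c`, each of these coordinates minimizes its own term of the
objective minus `c·α_i` over `α_i ≥ 0`, so the vector minimizes the objective among nonnegative
vectors of the same total mass.

The total mass is one for the following reason. The level `c_{k+1} = L̄_{k+1} + λ/M_{k+1}` is a
weighted average of `c_k` and `L̂_{k+1}`, so the cut-off condition at `k + 1`, which reads
`L̂_{k+1} < c_{k+1}`, is equivalent to `L̂_{k+1} < c_k`. Hence maximality of `p` gives
`L̂_p < c ≤ L̂_{p+1}`, and as the losses are sorted exactly the first `p` clients lie below the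
level; `c` is the level at which their weights sum to one.
-/

open Finset

noncomputable section

/-- `Mpart m k = Σ_{i=1}^k m_i`: total number of samples of the first `k` clients
(clients are 0-indexed, so these are clients `0, …, k-1`). -/
def Mpart (m : ℕ → ℝ) (k : ℕ) : ℝ := ∑ i ∈ Finset.range k, m i

/-- `Lbar m L k = (Σ_{i=1}^k m_i·L̂_i) / M_k`: the `k`-average loss. -/
def Lbar (m L : ℕ → ℝ) (k : ℕ) : ℝ :=
  (∑ i ∈ Finset.range k, m i * L i) / Mpart m k

/-- The set `{ k ∈ {1, …, N} : 1 + M_k·(L̄_k − L̂_k)/λ > 0 }`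
(with `L̂_k = L (k-1)` since losses are 0-indexed). -/
def goodSet (m L : ℕ → ℝ) (lam : ℝ) (N : ℕ) : Set ℕ :=
  {k | k ∈ Finset.Icc 1 N ∧ 0 < 1 + Mpart m k * (Lbar m L k - L (k - 1)) / lam}

/-- `p = max{ k ∈ {1,…,N} : 1 + M_k·(L̄_k − L̂_k)/λ > 0 }`. -/
def pIdx (m L : ℕ → ℝ) (lam : ℝ) (N : ℕ) : ℕ := sSup (goodSet m L lam N)

/-- The optimal weights `α*_i = (m_i/M_p)·[1 + M_p·(L̄_p − L̂_i)/λ]₊` (client `i` 0-indexed). -/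
def alphaStar (m L : ℕ → ℝ) (lam : ℝ) (N : ℕ) (i : ℕ) : ℝ :=
  (m i / Mpart m (pIdx m L lam N)) *
    max 0 (1 + Mpart m (pIdx m L lam N) * (Lbar m L (pIdx m L lam N) - L i) / lam)

/-- The objective `F(α) = Σ_i α_i·L̂_i + (λ/2)·Σ_i α_i²/m_i`. -/
def objF (N : ℕ) (m L : ℕ → ℝ) (lam : ℝ) (α : ℕ → ℝ) : ℝ :=
  ∑ i ∈ Finset.range N, α i * L i + lam / 2 * ∑ i ∈ Finset.range N, (α i) ^ 2 / m i

section WaterFilling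

variable {ι K : Type*} [Field K] [LinearOrder K]

/-- The water-filling allocation with level `c`: client `i` receives `(m_i/λ)·[c - L̂_i]₊`. -/
def waterFill (m L : ι → K) (lam c : K) (i : ι) : K := m i / lam * max 0 (c - L i)

variable [IsStrictOrderedRing K] {m L : ι → K} {lam c : K} {s t : Finset ι} {i : ι}

lemma waterFill_nonneg (hm : 0 ≤ m i) (hlam : 0 ≤ lam) : 0 ≤ waterFill m L lam c i :=
  mul_nonneg (div_nonneg hm hlam) (le_max_left _ _)

lemma waterFill_of_le (h : L i ≤ c) : waterFill m L lam c i = m i * (c - L i) / lam := by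
  rw [waterFill, max_eq_right (sub_nonneg.2 h), div_mul_eq_mul_div]

lemma waterFill_of_ge (h : c ≤ L i) : waterFill m L lam c i = 0 := by
  rw [waterFill, max_eq_left (sub_nonpos.2 h), mul_zero]

lemma sum_waterFill_of_subset (hts : t ⊆ s) (hle : ∀ i ∈ t, L i ≤ c)
    (hge : ∀ i ∈ s, i ∉ t → c ≤ L i) :
    ∑ i ∈ s, waterFill m L lam c i = (∑ i ∈ t, m i * (c - L i)) / lam := by
  rw [← sum_subset hts fun i hi hit => waterFill_of_ge (hge i hi hit), sum_div]
  exact sum_congr rfl fun i hi => waterFill_of_le (hle i hi)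

lemma isMinOn_Ici_waterFill (hm : 0 < m i) (hlam : 0 < lam) :
    IsMinOn (fun x => x * L i + lam / 2 * (x ^ 2 / m i) - c * x) (Set.Ici 0)
      (waterFill m L lam c i) := by
  intro b (hb : 0 ≤ b)
  set a := waterFill m L lam c i with ha
  -- The derivative at `a` of the function to be minimized, and the multiplier of `0 ≤ x`.
  set slack := max 0 (c - L i) - (c - L i) with hslack
  have slack_nonneg : 0 ≤ slack := sub_nonneg.2 (le_max_right _ _)
  have complementary_slackness : a * slack = 0 := by
    rcases le_total c (L i) with h | h
    · rw [ha, waterFill_of_ge h, zero_mul]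
    · rw [hslack, max_eq_right (sub_nonneg.2 h), sub_self, mul_zero]
  have expansion : b * L i + lam / 2 * (b ^ 2 / m i) - c * b =
      (a * L i + lam / 2 * (a ^ 2 / m i) - c * a) + (b - a) * slack +
        lam / (2 * m i) * (b - a) ^ 2 := by
    rw [hslack, ha, waterFill]
    field_simp
    ring
  have hquad : 0 ≤ lam / (2 * m i) * (b - a) ^ 2 := by positivity
  have hlin : 0 ≤ b * slack := mul_nonneg hb slack_nonneg
  change _ ≤ b * L i + lam / 2 * (b ^ 2 / m i) - c * b
  linarith

lemma isMinOn_waterFill (hm : ∀ i ∈ s, 0 < m i) (hlam : 0 < lam) :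
    IsMinOn (fun β : ι → K => ∑ i ∈ s, β i * L i + lam / 2 * ∑ i ∈ s, β i ^ 2 / m i)
      {β | (∀ i ∈ s, 0 ≤ β i) ∧ ∑ i ∈ s, β i = ∑ i ∈ s, waterFill m L lam c i}
      (waterFill m L lam c) := by
  rintro β ⟨hβ, hsum⟩
  have lagrangian_le := sum_le_sum fun i hi =>
    isMinOn_Ici_waterFill (L := L) (c := c) (hm i hi) hlam (hβ i hi)
  simp only [sum_sub_distrib, sum_add_distrib, ← mul_sum, hsum] at lagrangian_le
  exact (sub_le_sub_iff_right _).1 lagrangian_le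

end WaterFilling

section WaterLevel

/-- The level `c_k = L̄_k + λ/M_k` at which the water-filling weights of the first `k` clients, all
taken to lie below the level, sum to one. -/
def waterLevel (m L : ℕ → ℝ) (lam : ℝ) (k : ℕ) : ℝ := Lbar m L k + lam / Mpart m k

variable {m L : ℕ → ℝ} {lam : ℝ} {k : ℕ}

lemma Mpart_pos (hk : 1 ≤ k) (hm : ∀ i < k, 0 < m i) : 0 < Mpart m k :=
  sum_pos (fun i hi => hm i (mem_range.1 hi)) (nonempty_range_iff.2 (by omega))

lemma Mpart_mul_waterLevel (hM : Mpart m k ≠ 0) :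
    Mpart m k * waterLevel m L lam k = ∑ i ∈ range k, m i * L i + lam := by
  rw [waterLevel, Lbar, mul_add, mul_div_cancel₀ _ hM, mul_div_cancel₀ _ hM]

lemma sum_mul_waterLevel_sub (hM : Mpart m k ≠ 0) :
    ∑ i ∈ range k, m i * (waterLevel m L lam k - L i) = lam := by
  simp only [mul_sub, sum_sub_distrib, ← sum_mul]
  exact sub_eq_of_eq_add' (Mpart_mul_waterLevel hM)

lemma one_add_Mpart_mul_Lbar_sub_div (hM : Mpart m k ≠ 0) (hlam : lam ≠ 0) (x : ℝ) :
    1 + Mpart m k * (Lbar m L k - x) / lam = Mpart m k / lam * (waterLevel m L lam k - x) := by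
  rw [waterLevel]
  field_simp
  ring

lemma lt_waterLevel_succ_iff (hM : 0 < Mpart m k) (hM_succ : 0 < Mpart m (k + 1)) :
    L k < waterLevel m L lam (k + 1) ↔ L k < waterLevel m L lam k := by
  have weighted_gap : Mpart m (k + 1) * (waterLevel m L lam (k + 1) - L k) =
      Mpart m k * (waterLevel m L lam k - L k) := by
    rw [mul_sub, mul_sub, Mpart_mul_waterLevel hM.ne', Mpart_mul_waterLevel hM_succ.ne',
      Mpart, Mpart, sum_range_succ, sum_range_succ]
    ring
  rw [← sub_pos, ← mul_pos_iff_of_pos_left hM_succ, weighted_gap, mul_pos_iff_of_pos_left hM,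
    sub_pos]

end WaterLevel

section CutOff

variable {m L : ℕ → ℝ} {lam : ℝ} {i k N : ℕ}

lemma mem_goodSet_iff (hm : ∀ i < N, 0 < m i) (hlam : 0 < lam) (hk : 1 ≤ k) (hkN : k ≤ N) :
    k ∈ goodSet m L lam N ↔ L (k - 1) < waterLevel m L lam k := by
  have hM : 0 < Mpart m k := Mpart_pos hk fun i hi => hm i (hi.trans_le hkN)
  rw [goodSet, Set.mem_ofPred_eq, and_iff_right (mem_Icc.2 ⟨hk, hkN⟩),
    one_add_Mpart_mul_Lbar_sub_div hM.ne' hlam.ne', mul_pos_iff_of_pos_left (div_pos hM hlam),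
    sub_pos]

lemma isGreatest_pIdx (hN : 1 ≤ N) (hm : ∀ i < N, 0 < m i) (hlam : 0 < lam) :
    IsGreatest (goodSet m L lam N) (pIdx m L lam N) := by
  have one_mem : 1 ∈ goodSet m L lam N := by
    rw [mem_goodSet_iff hm hlam le_rfl hN]
    have hm₀ : 0 < m 0 := hm 0 hN
    simp [waterLevel, Lbar, Mpart, mul_div_cancel_left₀ _ hm₀.ne', div_pos hlam hm₀]
  have bddAbove : BddAbove (goodSet m L lam N) := ⟨N, fun k hk => (mem_Icc.1 hk.1).2⟩
  exact ⟨Nat.sSup_mem ⟨1, one_mem⟩ bddAbove, fun k hk => le_csSup bddAbove hk⟩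

lemma pIdx_mem_Icc (hN : 1 ≤ N) (hm : ∀ i < N, 0 < m i) (hlam : 0 < lam) :
    pIdx m L lam N ∈ Icc 1 N :=
  (isGreatest_pIdx hN hm hlam).1.1

lemma Mpart_pIdx_pos (hN : 1 ≤ N) (hm : ∀ i < N, 0 < m i) (hlam : 0 < lam) :
    0 < Mpart m (pIdx m L lam N) := by
  obtain ⟨one_le, le_N⟩ := mem_Icc.1 (pIdx_mem_Icc (L := L) hN hm hlam)
  exact Mpart_pos one_le fun i hi => hm i (hi.trans_le le_N)

lemma lt_waterLevel_pIdx (hN : 1 ≤ N) (hm : ∀ i < N, 0 < m i) (hL : MonotoneOn L (Set.Iio N))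
    (hlam : 0 < lam) (hi : i < pIdx m L lam N) :
    L i < waterLevel m L lam (pIdx m L lam N) := by
  obtain ⟨one_le, le_N⟩ := mem_Icc.1 (pIdx_mem_Icc (L := L) hN hm hlam)
  calc L i ≤ L (pIdx m L lam N - 1) :=
        hL (hi.trans_le le_N) (show _ < N by omega) (Nat.le_sub_one_of_lt hi)
    _ < waterLevel m L lam (pIdx m L lam N) :=
        (mem_goodSet_iff hm hlam one_le le_N).1 (isGreatest_pIdx hN hm hlam).1

lemma waterLevel_pIdx_le (hN : 1 ≤ N) (hm : ∀ i < N, 0 < m i) (hL : MonotoneOn L (Set.Iio N))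
    (hlam : 0 < lam) (hpi : pIdx m L lam N ≤ i) (hi : i < N) :
    waterLevel m L lam (pIdx m L lam N) ≤ L i := by
  have succ_le : pIdx m L lam N + 1 ≤ N := hpi.trans_lt hi
  have succ_notMem : pIdx m L lam N + 1 ∉ goodSet m L lam N := fun h =>
    Nat.not_succ_le_self _ ((isGreatest_pIdx hN hm hlam).2 h)
  rw [mem_goodSet_iff hm hlam (Nat.le_add_left 1 _) succ_le, Nat.add_sub_cancel,
    lt_waterLevel_succ_iff (Mpart_pIdx_pos hN hm hlam)
      (Mpart_pos (Nat.le_add_left 1 _) fun j hj => hm j (hj.trans_le succ_le)),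
    not_lt] at succ_notMem
  exact succ_notMem.trans (hL succ_le hi hpi)

lemma alphaStar_eq_waterFill (hN : 1 ≤ N) (hm : ∀ i < N, 0 < m i) (hlam : 0 < lam) :
    alphaStar m L lam N = waterFill m L lam (waterLevel m L lam (pIdx m L lam N)) := by
  have hM : 0 < Mpart m (pIdx m L lam N) := Mpart_pIdx_pos hN hm hlam
  funext i
  rw [alphaStar, waterFill, one_add_Mpart_mul_Lbar_sub_div hM.ne' hlam.ne',
    ← mul_zero (Mpart m _ / lam), ← mul_max_of_nonneg _ _ (div_pos hM hlam).le, mul_zero,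
    ← mul_assoc, div_mul_div_cancel₀ hM.ne']

lemma sum_alphaStar (hN : 1 ≤ N) (hm : ∀ i < N, 0 < m i) (hL : MonotoneOn L (Set.Iio N))
    (hlam : 0 < lam) : ∑ i ∈ range N, alphaStar m L lam N i = 1 := by
  have hpN : pIdx m L lam N ≤ N := (mem_Icc.1 (pIdx_mem_Icc hN hm hlam)).2
  rw [alphaStar_eq_waterFill hN hm hlam,
    sum_waterFill_of_subset (range_subset_range.2 hpN)
      (fun i hi => (lt_waterLevel_pIdx hN hm hL hlam (mem_range.1 hi)).le)
      (fun i hi hip => waterLevel_pIdx_le hN hm hL hlam (not_lt.1 (mt mem_range.2 hip))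
        (mem_range.1 hi)),
    sum_mul_waterLevel_sub (Mpart_pIdx_pos hN hm hlam).ne', div_self hlam.ne']

end CutOff

/-- `α*` is a minimizer of `F` over the simplex. -/
theorem alphaStar_isMinOn_simplex
    (N : ℕ) (hN : 1 ≤ N) (m L : ℕ → ℝ)
    (hm : ∀ i < N, 0 < m i)
    (hL : ∀ i j, i ≤ j → j < N → L i ≤ L j)
    (lam : ℝ) (hlam : 0 < lam) :
    ((∀ i < N, 0 ≤ alphaStar m L lam N i) ∧
      ∑ i ∈ Finset.range N, alphaStar m L lam N i = 1) ∧
    ∀ β : ℕ → ℝ, (∀ i < N, 0 ≤ β i) → ∑ i ∈ Finset.range N, β i = 1 →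
      objF N m L lam (alphaStar m L lam N) ≤ objF N m L lam β := by
  have hmono : MonotoneOn L (Set.Iio N) := fun i _ j hj hij => hL i j hij hj
  have hsum := sum_alphaStar hN hm hmono hlam
  have hfill := alphaStar_eq_waterFill (L := L) hN hm hlam
  refine ⟨⟨fun i hi => ?_, hsum⟩, fun β hβ hβsum => ?_⟩
  · rw [hfill]
    exact waterFill_nonneg (hm i hi).le hlam.le
  · rw [hfill] at hsum ⊢
    exact isMinOn_waterFill (fun i hi => hm i (mem_range.1 hi)) hlam
      ⟨fun i hi => hβ i (mem_range.1 hi), hβsum.trans hsum.symm⟩
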